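/- arXiv:1904.10815 — 5 statements merged into one kernel-verified Lean document; each statement's English description precedes it below -/
import Mathlib

section
/- Let α ∈ (0,1) be irrational with partial quotients aₖ bounded by a positive integer B, and let R be the minimal constant bounding, for all N ∈ ℕ, the ratios of the lengths of the subintervals into which {nα mod 1 : n = 0,…,N} divide the circle ℝ/ℤ. Then B − 1 ≤ R ≤ B + 2. -/
/-- The points `{nα mod 1 : n = 0, …, N}` on the circle `ℝ/ℤ ≃ [0,1)`. -/
noncomputable def torusPts (α : ℝ) (N : ℕ) : Finset ℝ :=
  (Finset.range (N + 1)).image fun n : ℕ => Int.fract ((n : ℝ) * α)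

/-- For a finite set `T ⊆ [0,1)` of points on the circle `ℝ/ℤ` and `t ∈ T`, the
length of the subinterval of the circle starting at `t`, i.e. the (cyclic) distance
from `t` to the next point of `T`. -/
noncomputable def cyclicGap (T : Finset ℝ) (t : ℝ) : ℝ :=
  sInf {d : ℝ | 0 < d ∧ Int.fract (t + d) ∈ T}

/-!
Let `η_n = |q_n α - p_n|` for the convergents `p_n / q_n` of `α`. If `N < q_{n+1}`, best
approximation shows that every gap of `{iα mod 1 : i = 0, …, N}` is at least `η_n`; if
`q_n ≤ N + 1`, stepping the index by `±q_{n-1}` or `±(q_{n-1} - q_n)` shows that every gap is at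
most `η_{n-1} + η_n`. When `q_n ≤ N + 1 ≤ q_{n+1}`, all gap ratios are therefore at most
`(η_{n-1} + η_n) / η_n ≤ a_{n+1} + 2`. Conversely, for `N = q_n` the points `0` and `q_n α` cut
off an arc of length `η_n`. The gap starting where this arc starts is at most `η_n`, and the gap
starting where it ends is at least `η_{n-1} - η_n`, a ratio of `η_{n-1} / η_n - 1 ≥ a_{n+1} - 1`.
-/

/-- `R` bounds every ratio of two gap lengths of `{nα mod 1 : n = 0, …, N}`, for every `N`. -/
def IsGapRatioBound (α R : ℝ) : Prop :=
  ∀ N : ℕ, ∀ t ∈ torusPts α N, ∀ u ∈ torusPts α N,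
    cyclicGap (torusPts α N) t ≤ R * cyclicGap (torusPts α N) u

lemma mem_torusPts_iff {α : ℝ} {N : ℕ} {x : ℝ} :
    x ∈ torusPts α N ↔ ∃ n ∈ Set.Icc (0 : ℤ) N, Int.fract ((n : ℝ) * α) = x := by
  simp only [torusPts, Finset.mem_image, Finset.mem_range, Set.mem_Icc]
  constructor
  · rintro ⟨n, hn, rfl⟩
    exact ⟨n, by omega, by simp only [Int.cast_natCast]⟩
  · rintro ⟨n, ⟨hn, hnN⟩, rfl⟩
    lift n to ℕ using hn
    exact ⟨n, by omega, by simp only [Int.cast_natCast]⟩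

lemma fract_add_mem_torusPts_iff {α : ℝ} {N : ℕ} {n : ℤ} {d : ℝ} :
    Int.fract (Int.fract ((n : ℝ) * α) + d) ∈ torusPts α N ↔
      ∃ m ∈ Set.Icc (0 : ℤ) N, ∃ z : ℤ, d = ((m - n : ℤ) : ℝ) * α - z := by
  rw [mem_torusPts_iff]
  refine exists_congr fun m => and_congr_right fun _ => ?_
  rw [Int.fract_eq_fract]
  have hfloor := Int.self_sub_floor ((n : ℝ) * α)
  constructor
  · rintro ⟨z, hz⟩
    exact ⟨z - ⌊(n : ℝ) * α⌋, by push_cast; linarith⟩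
  · rintro ⟨z, rfl⟩
    exact ⟨z + ⌊(n : ℝ) * α⌋, by push_cast; linarith⟩

lemma cyclicGap_nonneg (T : Finset ℝ) (t : ℝ) : 0 ≤ cyclicGap T t :=
  Real.sInf_nonneg fun _ hd => hd.1.le

lemma cyclicGap_torusPts_le {α d : ℝ} {N : ℕ} {n m z : ℤ} (hm : m ∈ Set.Icc (0 : ℤ) N)
    (hd : 0 < d) (h : d = ((m - n : ℤ) : ℝ) * α - z) :
    cyclicGap (torusPts α N) (Int.fract ((n : ℝ) * α)) ≤ d :=
  csInf_le ⟨0, fun _ hx => hx.1.le⟩ ⟨hd, fract_add_mem_torusPts_iff.2 ⟨m, hm, z, h⟩⟩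

lemma le_cyclicGap_torusPts {α c : ℝ} {N : ℕ} {n : ℤ} (hn : n ∈ Set.Icc (0 : ℤ) N)
    (h : ∀ m ∈ Set.Icc (0 : ℤ) N, ∀ z : ℤ,
      0 < ((m - n : ℤ) : ℝ) * α - z → c ≤ ((m - n : ℤ) : ℝ) * α - z) :
    c ≤ cyclicGap (torusPts α N) (Int.fract ((n : ℝ) * α)) := by
  have hfull_turn : Int.fract (Int.fract ((n : ℝ) * α) + 1) ∈ torusPts α N :=
    fract_add_mem_torusPts_iff.2 ⟨n, hn, -1, by simp⟩
  refine le_csInf ⟨1, one_pos, hfull_turn⟩ ?_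
  rintro d ⟨hd, hmem⟩
  obtain ⟨m, hm, z, rfl⟩ := fract_add_mem_torusPts_iff.1 hmem
  exact h m hm z hd

lemma exists_int_combination_of_isUnit_det {q q' p p' : ℤ} (hdet : IsUnit (q * p' - p * q'))
    (j z : ℤ) : ∃ u v : ℤ, j = u * q + v * q' ∧ z = u * p + v * p' := by
  have hsq := Int.isUnit_mul_self hdet
  refine ⟨(q * p' - p * q') * (j * p' - z * q'), (q * p' - p * q') * (z * q - j * p), ?_, ?_⟩
  · linear_combination -j * hsq
  · linear_combination -z * hsq

lemma coeff_signs_of_abs_combination_lt {q q' u v : ℤ} (hq : 0 ≤ q)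
    (h : |u * q + v * q'| < q') : u * v ≤ 0 ∧ (u = 0 → v = 0) := by
  obtain ⟨hlow, hupp⟩ := abs_lt.1 h
  have hq' : 0 < q' := (abs_nonneg _).trans_lt h
  refine ⟨?_, ?_⟩
  · by_contra! huv
    rcases mul_pos_iff.1 huv with ⟨hu, hv⟩ | ⟨hu, hv⟩ <;> nlinarith
  · rintro rfl
    have hlow' : -1 < v := by nlinarith
    have hupp' : v < 1 := by nlinarith
    omega

/-- Best approximation: in the basis `(q, p)`, `(q', p')` of `ℤ²`, the coordinates of a vector with
`|j| < q'` have opposite signs, so the two contributions to `j * α - z` cannot cancel. -/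
lemma abs_mul_sub_le_of_abs_lt {α : ℝ} {q q' p p' j z : ℤ}
    (hdet : IsUnit (q * p' - p * q')) (hq : 0 ≤ q)
    (hopp : (q * α - p) * (q' * α - p') ≤ 0) (hj : |j| < q') (hne : j * α - z ≠ 0) :
    |q * α - p| ≤ |j * α - z| := by
  obtain ⟨u, v, rfl, rfl⟩ := exists_int_combination_of_isUnit_det hdet j z
  obtain ⟨huv, huv0⟩ := coeff_signs_of_abs_combination_lt hq hj
  have hu : u ≠ 0 := by
    rintro rfl
    simp [huv0 rfl] at hne
  have hsame : 0 ≤ (u * (q * α - p)) * (v * (q' * α - p')) := by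
    have huv' : (u : ℝ) * v ≤ 0 := by exact_mod_cast huv
    nlinarith [mul_nonneg_of_nonpos_of_nonpos huv' hopp]
  have hu1 : (1 : ℝ) ≤ |(u : ℝ)| := by exact_mod_cast Int.one_le_abs hu
  calc |q * α - p| ≤ |(u : ℝ)| * |q * α - p| := le_mul_of_one_le_left (abs_nonneg _) hu1
    _ = |u * (q * α - p)| := (abs_mul _ _).symm
    _ ≤ |u * (q * α - p)| + |v * (q' * α - p')| := le_add_of_nonneg_right (abs_nonneg _)
    _ = |u * (q * α - p) + v * (q' * α - p')| :=
      ((abs_add_eq_add_abs_iff _ _).2 (mul_nonneg_iff.1 hsame)).symm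
    _ = |((u * q + v * q' : ℤ) : ℝ) * α - (u * p + v * p' : ℤ)| := by
      congr 1
      push_cast
      ring

/-- Denominators of the convergents of `[0; a 0, a 1, …]`, starting one step early, so that
`convDenom a (n + 1)` is the denominator of `[0; a 0, …, a (n - 1)]`. -/
def convDenom (a : ℕ → ℤ) : ℕ → ℤ
  | 0 => 0
  | 1 => 1
  | n + 2 => a n * convDenom a (n + 1) + convDenom a n

/-- Numerators of the convergents of `[0; a 0, a 1, …]`, indexed like `convDenom`. -/
def convNum (a : ℕ → ℤ) : ℕ → ℤ
  | 0 => 1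
  | 1 => 0
  | n + 2 => a n * convNum a (n + 1) + convNum a n

lemma convDenom_mul_convNum_sub (a : ℕ → ℤ) (n : ℕ) :
    convDenom a n * convNum a (n + 1) - convNum a n * convDenom a (n + 1) = (-1) ^ (n + 1) := by
  induction n with
  | zero => simp [convDenom, convNum]
  | succ n ih =>
    rw [convDenom, convNum, pow_succ, ← ih]
    ring

section Denominators

variable {a : ℕ → ℤ} (ha : ∀ n, 1 ≤ a n)
include ha

lemma convDenom_nonneg_and_one_le_succ (n : ℕ) : 0 ≤ convDenom a n ∧ 1 ≤ convDenom a (n + 1) := by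
  induction n with
  | zero => simp [convDenom]
  | succ n ih =>
    refine ⟨by omega, ?_⟩
    rw [convDenom]
    nlinarith [ha n]

lemma convDenom_nonneg (n : ℕ) : 0 ≤ convDenom a n :=
  (convDenom_nonneg_and_one_le_succ ha n).1

lemma convDenom_add_le (n : ℕ) : convDenom a n + convDenom a (n + 1) ≤ convDenom a (n + 2) := by
  rw [convDenom]
  nlinarith [ha n, convDenom_nonneg ha (n + 1)]

lemma convDenom_le_succ : ∀ n, convDenom a n ≤ convDenom a (n + 1)
  | 0 => by simp [convDenom]
  | n + 1 => by linarith [convDenom_add_le ha n, convDenom_nonneg ha n]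

lemma natCast_le_convDenom_succ : ∀ n : ℕ, (n : ℤ) ≤ convDenom a (n + 1)
  | 0 => by simp [convDenom]
  | 1 => (convDenom_nonneg_and_one_le_succ ha 1).2
  | n + 2 => by
    have hone := (convDenom_nonneg_and_one_le_succ ha n).2
    have hadd := convDenom_add_le ha (n + 1)
    have ih := natCast_le_convDenom_succ (n + 1)
    push_cast at ih ⊢
    linarith

lemma exists_convDenom_le_le {M : ℕ} (hM : 1 ≤ M) :
    ∃ n, convDenom a (n + 1) ≤ M ∧ (M : ℤ) ≤ convDenom a (n + 2) := by
  by_contra! hstep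
  have hbdd (n : ℕ) : convDenom a (n + 1) ≤ M := by
    induction n with
    | zero => simpa [convDenom] using hM
    | succ n ih => exact (hstep n ih).le
  have hlarge := natCast_le_convDenom_succ ha (M + 1)
  have hM1 := hbdd (M + 1)
  push_cast at hlarge
  omega

end Denominators

/-- The Euclidean algorithm for `α ∈ (0, 1)`, started at `1 = a 0 * α + e 2`: the quotients are
`a` and the remainders `e`. In the usual notation `e n = η_{n-1}` and `a n = a_{n+1}`. -/
structure IsEuclideanExpansion (α : ℝ) (a : ℕ → ℤ) (e : ℕ → ℝ) : Prop where
  zero : e 0 = 1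
  one : e 1 = α
  eq_mul_add (n : ℕ) : e n = a n * e (n + 1) + e (n + 2)
  pos (n : ℕ) : 0 < e n
  succ_lt (n : ℕ) : e (n + 1) < e n

namespace IsEuclideanExpansion

lemma of_int_index {α : ℝ} {a : ℤ → ℤ} {η : ℤ → ℝ} (hα : α < 1)
    (hη1 : η (-1) = 1) (hη0 : η 0 = α)
    (hrec : ∀ k : ℤ, 0 ≤ k → η (k - 1) = a (k + 1) * η k + η (k + 1))
    (hpos : ∀ k : ℤ, 0 ≤ k → 0 < η (k + 1) ∧ η (k + 1) < η k) :
    IsEuclideanExpansion α (fun n => a (n + 1)) (fun n => η (n - 1)) where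
  zero := by simpa using hη1
  one := by simpa using hη0
  eq_mul_add n := by
    convert hrec n (by omega) using 3 <;> push_cast <;> ring_nf
  pos
    | 0 => by simp [hη1]
    | n + 1 => by
      have := hpos n (by omega)
      simpa using this.1.trans this.2
  succ_lt
    | 0 => by simpa [hη1, hη0] using hα
    | n + 1 => by simpa using (hpos n (by omega)).2

variable {α : ℝ} {a : ℕ → ℤ} {e : ℕ → ℝ} (h : IsEuclideanExpansion α a e)
include h

lemma one_le_quotient (n : ℕ) : 1 ≤ a n := by
  by_contra! hlt
  have hle : (a n : ℝ) ≤ 0 := by exact_mod_cast Int.lt_add_one_iff.1 hlt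
  nlinarith [h.eq_mul_add n, h.succ_lt n, h.succ_lt (n + 1), h.pos (n + 1)]

lemma convDenom_mul_sub_convNum :
    ∀ n, convDenom a n * α - convNum a n = (-1) ^ (n + 1) * e n
  | 0 => by simp [convDenom, convNum, h.zero]
  | 1 => by simp [convDenom, convNum, h.one]
  | n + 2 => by
    have ih := convDenom_mul_sub_convNum n
    have ih' := convDenom_mul_sub_convNum (n + 1)
    rw [convDenom, convNum]
    push_cast
    linear_combination ih + a n * ih' + (-1) ^ (n + 1) * h.eq_mul_add n

lemma exists_sign_mul_eq (n : ℕ) : ∃ ε : ℤ, (ε = 1 ∨ ε = -1) ∧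
    ε * (convDenom a n * α - convNum a n) = e n ∧
    ε * (convDenom a (n + 1) * α - convNum a (n + 1)) = -e (n + 1) := by
  refine ⟨(-1) ^ (n + 1), neg_one_pow_eq_or ℤ _, ?_, ?_⟩
  all_goals
    rw [h.convDenom_mul_sub_convNum]
    push_cast
    rcases neg_one_pow_eq_or ℝ n with hn | hn <;> simp [pow_succ, hn]

lemma le_mul_sub_of_abs_lt_convDenom {n : ℕ} {j z : ℤ} (hj : |j| < convDenom a (n + 1))
    (hpos : 0 < j * α - z) : e n ≤ j * α - z := by
  have hdet : IsUnit (convDenom a n * convNum a (n + 1) - convNum a n * convDenom a (n + 1)) := by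
    rw [convDenom_mul_convNum_sub]
    exact isUnit_one.neg.pow _
  have hopp : (convDenom a n * α - convNum a n) *
      (convDenom a (n + 1) * α - convNum a (n + 1)) ≤ 0 := by
    have hprod := (mul_pos (h.pos n) (h.pos (n + 1))).le
    rw [h.convDenom_mul_sub_convNum, h.convDenom_mul_sub_convNum]
    rcases neg_one_pow_eq_or ℝ n with hn | hn <;> simpa [pow_succ, hn] using hprod
  have habs : |convDenom a n * α - convNum a n| = e n := by
    rw [h.convDenom_mul_sub_convNum, abs_mul, abs_neg_one_pow, one_mul, abs_of_pos (h.pos n)]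
  rw [← habs, ← abs_of_pos hpos]
  exact abs_mul_sub_le_of_abs_lt hdet (convDenom_nonneg h.one_le_quotient n) hopp hj hpos.ne'

lemma le_cyclicGap {N n : ℕ} (hN : N < convDenom a (n + 1)) {t : ℝ} (ht : t ∈ torusPts α N) :
    e n ≤ cyclicGap (torusPts α N) t := by
  obtain ⟨i, hi, rfl⟩ := mem_torusPts_iff.1 ht
  refine le_cyclicGap_torusPts hi fun m hm z => h.le_mul_sub_of_abs_lt_convDenom ?_
  rw [Set.mem_Icc] at hi hm
  exact abs_lt.2 ⟨by omega, by omega⟩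

/-- From the point of index `i` one may step by `±q` or, if that leaves `{0, …, N}`,
by `±(q - q')`; the sign is chosen so that both steps go in the positive direction. -/
lemma cyclicGap_le {N n : ℕ} (hN : convDenom a (n + 1) ≤ N + 1) {t : ℝ} (ht : t ∈ torusPts α N) :
    cyclicGap (torusPts α N) t ≤ e n + e (n + 1) := by
  obtain ⟨i, hi, rfl⟩ := mem_torusPts_iff.1 ht
  obtain ⟨ε, hε, hn, hn'⟩ := h.exists_sign_mul_eq n
  have hpos := h.pos n
  have hpos' := h.pos (n + 1)
  have hstep : i + ε * convDenom a n ∈ Set.Icc (0 : ℤ) N ∨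
      i + ε * (convDenom a n - convDenom a (n + 1)) ∈ Set.Icc (0 : ℤ) N := by
    have hnonneg := convDenom_nonneg h.one_le_quotient n
    have hmono := convDenom_le_succ h.one_le_quotient n
    simp only [Set.mem_Icc] at hi ⊢
    rcases hε with rfl | rfl <;> omega
  rcases hstep with hm | hm
  · have hgap : cyclicGap (torusPts α N) (Int.fract (i * α)) ≤ e n :=
      cyclicGap_torusPts_le (z := ε * convNum a n) hm hpos (by push_cast; linarith)
    linarith
  · exact cyclicGap_torusPts_le (z := ε * (convNum a n - convNum a (n + 1))) hm (by linarith)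
      (by push_cast; linarith)

lemma exists_cyclicGap_ge_and_le (n : ℕ) : ∃ N : ℕ, ∃ t ∈ torusPts α N, ∃ u ∈ torusPts α N,
    e n - e (n + 1) ≤ cyclicGap (torusPts α N) t ∧ cyclicGap (torusPts α N) u ≤ e (n + 1) := by
  obtain ⟨ε, hε, hεn, -⟩ := h.exists_sign_mul_eq (n + 1)
  obtain ⟨N, hN⟩ := Int.eq_ofNat_of_zero_le (convDenom_nonneg h.one_le_quotient (n + 1))
  obtain ⟨x, hx, y, hy, hyx⟩ : ∃ x ∈ Set.Icc (0 : ℤ) N, ∃ y ∈ Set.Icc (0 : ℤ) N,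
      y - x = ε * N := by
    rcases hε with rfl | rfl
    · exact ⟨0, by simp, N, by simp, by ring⟩
    · exact ⟨N, by simp, 0, by simp, by ring⟩
  have hshort : e (n + 1) = ((y - x : ℤ) : ℝ) * α - (ε * convNum a (n + 1) : ℤ) := by
    rw [hyx, ← hN, ← hεn]
    push_cast
    ring
  refine ⟨N, _, mem_torusPts_iff.2 ⟨y, hy, rfl⟩, _, mem_torusPts_iff.2 ⟨x, hx, rfl⟩,
    le_cyclicGap_torusPts hy fun m hm z hz => ?_, cyclicGap_torusPts_le hy (h.pos _) hshort⟩
  have hpos := h.pos (n + 1)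
  rcases eq_or_ne m x with rfl | hmx
  · have hturn : ((0 : ℤ) : ℝ) * α - (z + ε * convNum a (n + 1) : ℤ) =
        ((m - y : ℤ) : ℝ) * α - z + e (n + 1) := by
      rw [hshort]
      push_cast
      ring
    have hle := h.le_mul_sub_of_abs_lt_convDenom (n := n) (j := 0)
      (z := z + ε * convNum a (n + 1))
      (by simpa using
        zero_lt_one.trans_le (convDenom_nonneg_and_one_le_succ h.one_le_quotient n).2)
      (by linarith)
    linarith
  · have hj : |m - y| < convDenom a (n + 1) := by
      rw [Set.mem_Icc] at hx hy hm
      rcases hε with rfl | rfl <;> exact abs_lt.2 ⟨by omega, by omega⟩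
    linarith [h.le_mul_sub_of_abs_lt_convDenom hj hz]

lemma quotient_sub_one_le {R : ℝ} (hR : IsGapRatioBound α R) (n : ℕ) : a n - 1 ≤ R := by
  obtain ⟨N, t, ht, u, hu, hlarge, hsmall⟩ := h.exists_cyclicGap_ge_and_le n
  have hratio : e n - e (n + 1) ≤ R * cyclicGap (torusPts α N) u := hlarge.trans (hR N t ht u hu)
  have hRpos : 0 < R :=
    pos_of_mul_pos_left ((sub_pos.2 (h.succ_lt n)).trans_le hratio) (cyclicGap_nonneg _ _)
  refine le_of_mul_le_mul_right ?_ (h.pos (n + 1))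
  calc (a n - 1) * e (n + 1) ≤ e n - e (n + 1) := by
        linarith [h.eq_mul_add n, h.pos (n + 2)]
    _ ≤ R * e (n + 1) := hratio.trans (mul_le_mul_of_nonneg_left hsmall hRpos.le)

lemma isGapRatioBound {B : ℝ} (hB : ∀ n, a n ≤ B) : IsGapRatioBound α (B + 2) := by
  intro N t ht u hu
  obtain ⟨n, hle, hge⟩ := exists_convDenom_le_le h.one_le_quotient (Nat.le_add_left 1 N)
  push_cast at hle hge
  have ha : (1 : ℝ) ≤ a n := by exact_mod_cast h.one_le_quotient n
  have hBn := hB n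
  calc cyclicGap (torusPts α N) t ≤ e n + e (n + 1) := h.cyclicGap_le hle ht
    _ = (a n + 1) * e (n + 1) + e (n + 2) := by rw [h.eq_mul_add n]; ring
    _ ≤ (a n + 2) * e (n + 1) := by linarith [h.succ_lt (n + 1)]
    _ ≤ (B + 2) * e (n + 1) := by gcongr; exact (h.pos _).le
    _ ≤ (B + 2) * cyclicGap (torusPts α N) u :=
      mul_le_mul_of_nonneg_left (h.le_cyclicGap (Int.add_one_le_iff.1 hge) hu) (by linarith)

end IsEuclideanExpansion

lemma exists_le_of_isLeast_pos_bound {a : ℤ → ℤ} {B : ℤ} (ha : 1 ≤ a 1)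
    (hB : IsLeast {b : ℤ | 0 < b ∧ ∀ k : ℤ, 1 ≤ k → a k ≤ b} B) : ∃ n : ℕ, B ≤ a (n + 1) := by
  by_contra! hlt
  have hlt_of_one_le (k : ℤ) (hk : 1 ≤ k) : a k < B := by
    obtain ⟨n, rfl⟩ : ∃ n : ℕ, k = n + 1 := ⟨(k - 1).toNat, by omega⟩
    exact hlt n
  have hle : B ≤ B - 1 := hB.2
    ⟨by linarith [hlt_of_one_le 1 le_rfl], fun k hk => Int.le_sub_one_of_lt (hlt_of_one_le k hk)⟩
  omega

/-- Let `α ∈ (0,1)` be irrational with continued fraction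
expansion `α = [0; a₁, a₂, …]`, encoded by the Euclidean division data `η₋₁ = 1`,
`η₀ = α`, `η_{k-1} = a_{k+1} η_k + η_{k+1}` with `0 < η_{k+1} < η_k`.  Let `B` be
the least positive integer bounding all partial quotients `aₖ` (`k ≥ 1`), and let
`R` be the minimal constant bounding, over all `N ∈ ℕ`, the ratios of the lengths
of the subintervals into which `{nα mod 1 : n = 0, …, N}` divide the circle `ℝ/ℤ`.
Then `B − 1 ≤ R ≤ B + 2`. -/
theorem partial_quotient_bound_vs_gap_ratio_bound
    (α : ℝ) (hα : α ∈ Set.Ioo (0 : ℝ) 1) (hirr : Irrational α)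
    (a : ℤ → ℤ) (η : ℤ → ℝ)
    (hη1 : η (-1) = 1) (hη0 : η 0 = α)
    (hrec : ∀ k : ℤ, 0 ≤ k → η (k - 1) = a (k + 1) * η k + η (k + 1))
    (hpos : ∀ k : ℤ, 0 ≤ k → 0 < η (k + 1) ∧ η (k + 1) < η k)
    (B : ℤ)
    (hB : IsLeast {b : ℤ | 0 < b ∧ ∀ k : ℤ, 1 ≤ k → a k ≤ b} B)
    (R : ℝ)
    (hR : IsLeast {R' : ℝ | ∀ N : ℕ, ∀ t ∈ torusPts α N, ∀ u ∈ torusPts α N,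
      cyclicGap (torusPts α N) t ≤ R' * cyclicGap (torusPts α N) u} R) :
    (B : ℝ) - 1 ≤ R ∧ R ≤ (B : ℝ) + 2 := by
  have h := IsEuclideanExpansion.of_int_index hα.2 hη1 hη0 hrec hpos
  constructor
  · obtain ⟨n, hn⟩ := exists_le_of_isLeast_pos_bound (h.one_le_quotient 0) hB
    calc (B : ℝ) - 1 ≤ a (n + 1) - 1 := by gcongr
      _ ≤ R := h.quotient_sub_one_le hR.1 n
  · exact hR.2 (h.isGapRatioBound fun n => by exact_mod_cast hB.1.2 (n + 1) (by omega))
end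

section
/- Let α ∈ (0,1) be irrational with continued fraction convergents pₖ/qₖ and ηₖ = (−1)ᵏ(qₖα − pₖ). For N = qₖ + q_{k−1} − 1, exactly two distinct lengths appear in the partition of the circle ℝ/ℤ by the points {nα mod 1 : n = 0, 1, …, N}, namely η_{k−1} and ηₖ. -/
/-!
Two consecutive convergents `r / u < α < s / v` satisfy `s * u - r * v = 1`, so every `j * α - i`
is an integer combination `x * (u * α - r) + y * (s - v * α)` with `j = x * u - y * v`. A positive
value with `|j| < u + v` forces `x, y ≥ 0`. Hence, among the points `n * α` with `0 ≤ n < u + v`,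
the successor of `n * α` on the circle is `(n + u) * α` if `n < v` and `(n - v) * α` otherwise.
-/

theorem fract_fract_add_mem_torusPts_iff {α : ℝ} {N n : ℕ} {d : ℝ} :
    Int.fract (Int.fract (n * α) + d) ∈ torusPts α N ↔
      ∃ j i : ℤ, 0 ≤ n + j ∧ n + j ≤ N ∧ j * α - i = d := by
  have hfloor := Int.self_sub_floor (n * α)
  simp only [torusPts, Finset.mem_image, Finset.mem_range, Int.fract_eq_fract]
  constructor
  · rintro ⟨m, hm, z, hz⟩
    refine ⟨m - n, z - ⌊n * α⌋, by lia, by lia, ?_⟩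
    push_cast
    linarith
  · rintro ⟨j, i, hj_nonneg, hj_le, rfl⟩
    obtain ⟨m, hm⟩ := Int.eq_ofNat_of_zero_le hj_nonneg
    have hm_real : (m : ℝ) = n + j := by exact_mod_cast hm.symm
    refine ⟨m, by lia, i + ⌊n * α⌋, ?_⟩
    rw [hm_real]
    push_cast
    linarith

/-- The fractions `r / u < α < s / v` are neighbours in some Farey sequence and enclose `α`. -/
structure IsFareyBracket (α : ℝ) (r u s v : ℤ) : Prop where
  left_den_pos : 0 < u
  right_den_pos : 0 < v
  left_lt : r < u * α
  lt_right : v * α < s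
  det_eq_one : s * u - r * v = 1

namespace IsFareyBracket

variable {α : ℝ} {r u s v : ℤ}

protected theorem neg (h : IsFareyBracket α r u s v) : IsFareyBracket (-α) (-s) v (-r) u where
  left_den_pos := h.right_den_pos
  right_den_pos := h.left_den_pos
  left_lt := by simpa using h.lt_right
  lt_right := by simpa using h.left_lt
  det_eq_one := by linear_combination h.det_eq_one

theorem exists_coords (h : IsFareyBracket α r u s v) (j i : ℤ) :
    ∃ x y : ℤ, j = x * u - y * v ∧ j * α - i = x * (u * α - r) + y * (s - v * α) := by
  have hdet : (s * u - r * v : ℝ) = 1 := by exact_mod_cast h.det_eq_one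
  refine ⟨j * s - i * v, j * r - i * u, by linear_combination -j * h.det_eq_one, ?_⟩
  push_cast
  linear_combination (-j * α + i) * hdet

theorem left_gap_le (h : IsFareyBracket α r u s v) {j i : ℤ} (hj_gt : -v < j) (hj_lt : j < u + v)
    (hpos : 0 < j * α - i) : u * α - r ≤ j * α - i := by
  obtain ⟨x, y, hj, hd⟩ := h.exists_coords j i
  have hu := h.left_den_pos
  have hv := h.right_den_pos
  have hleft : 0 < u * α - r := sub_pos.2 h.left_lt
  have hright : 0 < s - v * α := sub_pos.2 h.lt_right
  rw [hd] at hpos ⊢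
  have hy : 0 ≤ y := by
    by_contra! hy
    have hx : 0 < x := by
      have hy' : (y : ℝ) < 0 := by exact_mod_cast hy
      have : (0 : ℝ) < x := pos_of_mul_pos_left (by nlinarith) hleft.le
      exact_mod_cast this
    nlinarith
  have hx : 1 ≤ x := by
    by_contra! hx
    have hy : 0 < y := by
      have hx' : (x : ℝ) ≤ 0 := by exact_mod_cast Int.lt_add_one_iff.1 hx
      have : (0 : ℝ) < y := pos_of_mul_pos_left (by nlinarith) hright.le
      exact_mod_cast this
    nlinarith
  have hx' : (1 : ℝ) ≤ x := by exact_mod_cast hx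
  have hy' : (0 : ℝ) ≤ y := by exact_mod_cast hy
  nlinarith

theorem right_gap_le (h : IsFareyBracket α r u s v) {j i : ℤ} (hj_gt : -(u + v) < j) (hj_lt : j < u)
    (hpos : 0 < j * α - i) : s - v * α ≤ j * α - i := by
  have hneg := h.neg.left_gap_le (j := -j) (i := i) (by lia) (by lia) (by simpa using hpos)
  push_cast at hneg
  linarith

variable {N n : ℕ}

theorem cyclicGap_eq_left (h : IsFareyBracket α r u s v) (hN : (N : ℤ) = u + v - 1)
    (hn : n < v) : cyclicGap (torusPts α N) (Int.fract (n * α)) = u * α - r := by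
  have hu := h.left_den_pos
  refine IsLeast.csInf_eq ⟨⟨sub_pos.2 h.left_lt, ?_⟩, ?_⟩
  · exact fract_fract_add_mem_torusPts_iff.2 ⟨u, r, by lia, by lia, rfl⟩
  · rintro d ⟨hd, hmem⟩
    obtain ⟨j, i, hj_nonneg, hj_le, rfl⟩ := fract_fract_add_mem_torusPts_iff.1 hmem
    exact h.left_gap_le (by lia) (by lia) hd

theorem cyclicGap_eq_right (h : IsFareyBracket α r u s v) (hN : (N : ℤ) = u + v - 1)
    (hvn : v ≤ n) (hnN : n ≤ N) :
    cyclicGap (torusPts α N) (Int.fract (n * α)) = s - v * α := by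
  have hv := h.right_den_pos
  refine IsLeast.csInf_eq ⟨⟨sub_pos.2 h.lt_right, ?_⟩, ?_⟩
  · refine fract_fract_add_mem_torusPts_iff.2 ⟨-v, -s, by lia, by lia, ?_⟩
    push_cast
    ring
  · rintro d ⟨hd, hmem⟩
    obtain ⟨j, i, hj_nonneg, hj_le, rfl⟩ := fract_fract_add_mem_torusPts_iff.1 hmem
    exact h.right_gap_le (by lia) (by lia) hd

theorem image_cyclicGap (h : IsFareyBracket α r u s v) (hN : (N : ℤ) = u + v - 1) :
    (torusPts α N).image (cyclicGap (torusPts α N)) = {u * α - r, s - v * α} := by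
  have hu := h.left_den_pos
  have hv := h.right_den_pos
  have mem_torusPts {n : ℕ} (hn : n ≤ N) : Int.fract (n * α) ∈ torusPts α N :=
    Finset.mem_image_of_mem _ (Finset.mem_range_succ_iff.2 hn)
  ext d
  simp only [Finset.mem_image, Finset.mem_insert, Finset.mem_singleton]
  constructor
  · rintro ⟨t, ht, rfl⟩
    obtain ⟨n, hn, rfl⟩ := Finset.mem_image.1 ht
    rcases lt_or_ge (n : ℤ) v with hnv | hvn
    · exact .inl (h.cyclicGap_eq_left hN hnv)
    · exact .inr (h.cyclicGap_eq_right hN hvn (Finset.mem_range_succ_iff.1 hn))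
  · rintro (rfl | rfl)
    · exact ⟨_, mem_torusPts N.zero_le, h.cyclicGap_eq_left hN (mod_cast hv)⟩
    · exact ⟨_, mem_torusPts le_rfl, h.cyclicGap_eq_right hN (by lia) le_rfl⟩

end IsFareyBracket

/-- The continued fraction data of `α` up to index `K`: the partial quotients `a k`, the convergents
`p k / q k` and the distances `η k = |q k * α - p k|`. Indices start at `-1`, and the inequalities
on `η` characterise the partial quotients. Only indices up to `K` are constrained, so that `α` may
also be a rational number whose expansion does not stop before index `K + 1`. -/
structure IsConvergentsUpTo (α : ℝ) (a p q : ℤ → ℤ) (η : ℤ → ℝ) (K : ℤ) : Prop where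
  mem_Ioo : α ∈ Set.Ioo (0 : ℝ) 1
  p_neg_one : p (-1) = 1
  p_zero : p 0 = 0
  q_neg_one : q (-1) = 0
  q_zero : q 0 = 1
  p_add_one : ∀ k, 0 ≤ k → k < K → p (k + 1) = a (k + 1) * p k + p (k - 1)
  q_add_one : ∀ k, 0 ≤ k → k < K → q (k + 1) = a (k + 1) * q k + q (k - 1)
  eta_eq : ∀ k, -1 ≤ k → k ≤ K → η k = (-1 : ℝ) ^ k * (q k * α - p k)
  eta_add_one_pos : ∀ k, 0 ≤ k → k < K → 0 < η (k + 1)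
  eta_add_one_lt : ∀ k, 0 ≤ k → k < K → η (k + 1) < η k

namespace IsConvergentsUpTo

variable {α : ℝ} {a p q : ℤ → ℤ} {η : ℤ → ℝ} {K k : ℤ}

theorem eta_neg_one (h : IsConvergentsUpTo α a p q η K) (hK : -1 ≤ K) : η (-1) = 1 := by
  simp [h.eta_eq (-1) le_rfl hK, h.p_neg_one, h.q_neg_one]

theorem eta_zero (h : IsConvergentsUpTo α a p q η K) (hK : 0 ≤ K) : η 0 = α := by
  simp [h.eta_eq 0 (by simp) hK, h.p_zero, h.q_zero]

theorem eta_of_even (h : IsConvergentsUpTo α a p q η K) (hk : -1 ≤ k) (hkK : k ≤ K)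
    (heven : Even k) : η k = q k * α - p k := by
  rw [h.eta_eq k hk hkK, heven.neg_one_zpow, one_mul]

theorem eta_of_odd (h : IsConvergentsUpTo α a p q η K) (hk : -1 ≤ k) (hkK : k ≤ K)
    (hodd : Odd k) : η k = p k - q k * α := by
  rw [h.eta_eq k hk hkK, hodd.neg_one_zpow, neg_one_mul, neg_sub]

theorem eta_pos (h : IsConvergentsUpTo α a p q η K) (hk : 0 ≤ k) (hkK : k ≤ K) : 0 < η k := by
  obtain rfl | hk := hk.eq_or_lt
  · simpa only [h.eta_zero hkK] using h.mem_Ioo.1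
  · simpa only [sub_add_cancel] using h.eta_add_one_pos (k - 1) (by lia) (by lia)

theorem eta_lt_eta_sub_one (h : IsConvergentsUpTo α a p q η K) (hk : 0 ≤ k) (hkK : k ≤ K) :
    η k < η (k - 1) := by
  obtain rfl | hk := hk.eq_or_lt
  · simpa only [zero_sub, h.eta_zero hkK, h.eta_neg_one (by lia)] using h.mem_Ioo.2
  · simpa only [sub_add_cancel] using h.eta_add_one_lt (k - 1) (by lia) (by lia)

theorem eta_add_one (h : IsConvergentsUpTo α a p q η K) (hk : 0 ≤ k) (hkK : k < K) :
    η (k + 1) = η (k - 1) - a (k + 1) * η k := by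
  rw [h.eta_eq (k + 1) (by lia) (by lia), h.eta_eq (k - 1) (by lia) (by lia),
    h.eta_eq k (by lia) hkK.le, h.p_add_one k hk hkK, h.q_add_one k hk hkK,
    zpow_add_one₀ (by norm_num), zpow_sub_one₀ (by norm_num)]
  push_cast
  ring

theorem one_le_partialQuotient (h : IsConvergentsUpTo α a p q η K) (hk : 0 ≤ k) (hkK : k < K) :
    1 ≤ a (k + 1) := by
  by_contra! ha
  have ha' : (a (k + 1) : ℝ) ≤ 0 := by exact_mod_cast Int.lt_add_one_iff.1 ha
  nlinarith [h.eta_add_one hk hkK, h.eta_add_one_lt k hk hkK, h.eta_lt_eta_sub_one hk hkK.le,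
    h.eta_pos hk hkK.le]

theorem q_pos (h : IsConvergentsUpTo α a p q η K) (hk : 0 ≤ k) (hkK : k ≤ K) : 0 < q k := by
  suffices 0 < q k ∧ 0 ≤ q (k - 1) from this.1
  induction k, hk using Int.leInduction with
  | base => simp [h.q_zero, h.q_neg_one]
  | succ k hk ih =>
    obtain ⟨hq_pos, hq_prev⟩ := ih (by lia)
    have ha := h.one_le_partialQuotient hk (by lia)
    rw [h.q_add_one k hk (by lia), add_sub_cancel_right]
    exact ⟨by positivity, hq_pos.le⟩

/-- This is `q k * p (k - 1) - q (k - 1) * p k = (-1) ^ k` in a form that does not involve the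
parity of `k`; at `N = q k + q (k - 1) - 1` it says that the lengths of the partition add up to
`1`. -/
theorem q_mul_eta_add_q_mul_eta (h : IsConvergentsUpTo α a p q η K) (hk : 0 ≤ k) (hkK : k ≤ K) :
    q k * η (k - 1) + q (k - 1) * η k = 1 := by
  induction k, hk using Int.leInduction with
  | base => simp [h.q_zero, h.q_neg_one, h.eta_neg_one (by lia)]
  | succ k hk ih =>
    rw [h.q_add_one k hk (by lia), h.eta_add_one hk (by lia), add_sub_cancel_right, ← ih (by lia)]
    push_cast
    ring

theorem isFareyBracket_of_even (h : IsConvergentsUpTo α a p q η K) (hk : 1 ≤ k) (hkK : k ≤ K)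
    (heven : Even k) : IsFareyBracket α (p k) (q k) (p (k - 1)) (q (k - 1)) := by
  have heta := h.eta_of_even (by lia) hkK heven
  have heta_prev := h.eta_of_odd (by lia) (by lia) (heven.sub_odd odd_one)
  have hsum := h.q_mul_eta_add_q_mul_eta (by lia) hkK
  refine ⟨h.q_pos (by lia) hkK, h.q_pos (by lia) (by lia), ?_, ?_, ?_⟩
  · linarith [h.eta_pos (by lia) hkK]
  · linarith [h.eta_pos (k := k - 1) (by lia) (by lia)]
  · rw [heta, heta_prev] at hsum
    exact_mod_cast (by linarith : (p (k - 1) * q k - p k * q (k - 1) : ℝ) = 1)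

theorem isFareyBracket_of_odd (h : IsConvergentsUpTo α a p q η K) (hk : 1 ≤ k) (hkK : k ≤ K)
    (hodd : Odd k) : IsFareyBracket α (p (k - 1)) (q (k - 1)) (p k) (q k) := by
  have heta := h.eta_of_odd (by lia) hkK hodd
  have heta_prev := h.eta_of_even (by lia) (by lia) (hodd.sub_odd odd_one)
  have hsum := h.q_mul_eta_add_q_mul_eta (by lia) hkK
  refine ⟨h.q_pos (by lia) (by lia), h.q_pos (by lia) hkK, ?_, ?_, ?_⟩
  · linarith [h.eta_pos (k := k - 1) (by lia) (by lia)]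
  · linarith [h.eta_pos (by lia) hkK]
  · rw [heta, heta_prev] at hsum
    exact_mod_cast (by linarith : (p k * q (k - 1) - p (k - 1) * q k : ℝ) = 1)

end IsConvergentsUpTo

theorem two_lengths_at_special_N_general {α : ℝ} {a p q : ℤ → ℤ} {η : ℤ → ℝ} {K : ℤ} {N : ℕ}
    (h : IsConvergentsUpTo α a p q η K) (hK : 1 ≤ K) (hN : (N : ℤ) = q K + q (K - 1) - 1) :
    (torusPts α N).image (cyclicGap (torusPts α N)) = {η (K - 1), η K} ∧ η (K - 1) ≠ η K := by
  refine ⟨?_, (h.eta_lt_eta_sub_one (by lia) le_rfl).ne'⟩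
  rcases Int.even_or_odd K with heven | hodd
  · rw [h.eta_of_even (by lia) le_rfl heven,
      h.eta_of_odd (by lia) (by lia) (heven.sub_odd odd_one), Finset.pair_comm]
    exact (h.isFareyBracket_of_even hK le_rfl heven).image_cyclicGap hN
  · rw [h.eta_of_odd (by lia) le_rfl hodd,
      h.eta_of_even (by lia) (by lia) (hodd.sub_odd odd_one)]
    exact (h.isFareyBracket_of_odd hK le_rfl hodd).image_cyclicGap (by lia)

/-- Let `α ∈ (0,1)` be irrational with continued fraction
convergents `pₖ/qₖ` (`p₋₁ = 1`, `p₀ = 0`, `q₋₁ = 0`, `q₀ = 1`,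
`p_{k+1} = a_{k+1} pₖ + p_{k-1}`, `q_{k+1} = a_{k+1} qₖ + q_{k-1}`) and
`ηₖ = (−1)ᵏ (qₖ α − pₖ)`.  For `N = qₖ + q_{k-1} − 1` (with `k ≥ 1`), exactly two
distinct lengths appear in the partition of the circle `ℝ/ℤ` by the points
`{nα mod 1 : n = 0, …, N}`, namely `η_{k-1}` and `ηₖ`. -/
theorem two_lengths_at_special_N
    (α : ℝ) (hα : α ∈ Set.Ioo (0 : ℝ) 1) (hirr : Irrational α)
    (a p q : ℤ → ℤ) (η : ℤ → ℝ)
    (hp : p (-1) = 1 ∧ p 0 = 0) (hq : q (-1) = 0 ∧ q 0 = 1)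
    (hpq : ∀ k : ℤ, 0 ≤ k →
      p (k + 1) = a (k + 1) * p k + p (k - 1) ∧
      q (k + 1) = a (k + 1) * q k + q (k - 1))
    (hηdef : ∀ k : ℤ, -1 ≤ k → η k = (-1 : ℝ) ^ k * ((q k : ℝ) * α - (p k : ℝ)))
    (hpos : ∀ k : ℤ, 0 ≤ k → 0 < η (k + 1) ∧ η (k + 1) < η k)
    (N : ℕ) (k : ℤ) (hk : 1 ≤ k)
    (hN : (N : ℤ) = q k + q (k - 1) - 1) :
    (torusPts α N).image (cyclicGap (torusPts α N)) = {η (k - 1), η k} ∧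
      η (k - 1) ≠ η k :=
  two_lengths_at_special_N_general (K := k)
    ⟨hα, hp.1, hp.2, hq.1, hq.2, fun j hj _ ↦ (hpq j hj).1, fun j hj _ ↦ (hpq j hj).2,
      fun j hj _ ↦ hηdef j hj, fun j hj _ ↦ (hpos j hj).1, fun j hj _ ↦ (hpos j hj).2⟩ hk hN
end

section
/- Let α ∈ [0,1) be irrational and r > 1/2. If the set X(√t, α) = { √n · e^{2πi n α} : n ∈ ℕ } ⊂ ℂ is r-relatively dense, then for every real m ≥ 16r² and every β ∈ [0,1) there exists n ∈ ℕ satisfying m − 3r√m ≤ n ≤ m + 3r√m and ‖nα − β‖ ≤ r/(2√m), where ‖x‖ denotes the distance from x to the nearest integer. -/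
/-- The Fermat-spiral point set `X(√t, α) = { √n·e^{2πi n α} : n ∈ ℕ } ⊆ ℂ`. -/
noncomputable def fermatSpiral (α : ℝ) : Set ℂ :=
  {z : ℂ | ∃ n : ℕ, z = Real.sqrt n * Complex.exp (2 * Real.pi * Complex.I * (n * α))}

/-- `‖x‖`, the distance from the real number `x` to the nearest integer. -/
noncomputable def nearestIntDist (x : ℝ) : ℝ := |x - round x|

/-!
If `√n e^{2πinα}` lies within `r` of `w = √m e^{2πiβ}`, comparing the two moduli locates `√n`,
hence `n`. Since `r ≤ √m = |w|`, the two points are seen from the origin under an angle of at most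
a right angle, so the law of sines and Jordan's inequality `2x/π ≤ sin x` bound that angle by
`(π/2) r/√m`. The angle equals `2π‖nα - β‖`.
-/

open Complex InnerProductGeometry

section InnerProductSpace

variable {V : Type*} [NormedAddCommGroup V] [InnerProductSpace ℝ V] {x y : V}

lemma angle_le_pi_div_two_of_norm_sub_le (h : ‖x - y‖ ≤ ‖y‖) : angle x y ≤ Real.pi / 2 := by
  have hsq : ‖x - y‖ ^ 2 ≤ ‖y‖ ^ 2 := by gcongr
  have hinner : 0 ≤ inner ℝ x y := by
    rw [norm_sub_sq_real] at hsq
    linarith [sq_nonneg ‖x‖]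
  exact Real.arccos_le_pi_div_two.2 (div_nonneg hinner (by positivity))

lemma sin_angle_mul_norm_le_norm_sub (x y : V) : Real.sin (angle x y) * ‖y‖ ≤ ‖x - y‖ := by
  calc Real.sin (angle x y) * ‖y‖ = Real.sin (angle x (y - x)) * ‖y - x‖ := by
        rw [angle_comm x y, sin_angle_mul_norm_eq_sin_angle_mul_norm]
    _ ≤ 1 * ‖y - x‖ := by gcongr; exact Real.sin_le_one _
    _ = ‖x - y‖ := by rw [one_mul, norm_sub_rev]

lemma two_div_pi_mul_angle_mul_norm_le_norm_sub (h : ‖x - y‖ ≤ ‖y‖) :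
    2 / Real.pi * angle x y * ‖y‖ ≤ ‖x - y‖ := by
  calc 2 / Real.pi * angle x y * ‖y‖ ≤ Real.sin (angle x y) * ‖y‖ := by
        gcongr
        exact Real.mul_le_sin (angle_nonneg x y) (angle_le_pi_div_two_of_norm_sub_le h)
    _ ≤ ‖x - y‖ := sin_angle_mul_norm_le_norm_sub x y

end InnerProductSpace

lemma nearestIntDist_nonneg (t : ℝ) : 0 ≤ nearestIntDist t := abs_nonneg _

lemma nearestIntDist_le_half (t : ℝ) : nearestIntDist t ≤ 1 / 2 := abs_sub_round t

lemma cos_two_pi_mul_nearestIntDist (t : ℝ) :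
    Real.cos (2 * Real.pi * nearestIntDist t) = Real.cos (2 * Real.pi * t) := by
  calc Real.cos (2 * Real.pi * nearestIntDist t)
      = Real.cos |2 * Real.pi * (t - round t)| := by
        rw [nearestIntDist, abs_mul, abs_of_pos Real.two_pi_pos]
    _ = Real.cos (2 * Real.pi * t - round t * (2 * Real.pi)) := by
        rw [Real.cos_abs]
        ring_nf
    _ = Real.cos (2 * Real.pi * t) := Real.cos_sub_int_mul_two_pi _ _

lemma norm_exp_two_pi_mul_I_mul (θ : ℝ) : ‖exp (2 * Real.pi * I * θ)‖ = 1 := by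
  simpa [mul_right_comm] using norm_exp_ofReal_mul_I (2 * Real.pi * θ)

lemma norm_ofReal_mul_exp_two_pi_mul_I_mul {s : ℝ} (hs : 0 ≤ s) (θ : ℝ) :
    ‖s * exp (2 * Real.pi * I * θ)‖ = s := by
  rw [norm_mul, norm_exp_two_pi_mul_I_mul, mul_one, norm_real, Real.norm_of_nonneg hs]

lemma inner_exp_two_pi_mul_I_mul (θ φ : ℝ) :
    inner ℝ (exp (2 * Real.pi * I * θ)) (exp (2 * Real.pi * I * φ)) =
      Real.cos (2 * Real.pi * (θ - φ)) := by
  have polar (x : ℝ) : exp (2 * Real.pi * I * x) = exp ((2 * Real.pi * x : ℝ) * I) := by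
    push_cast
    ring_nf
  rw [mul_sub, Real.cos_sub, Complex.inner, polar, polar]
  simp only [mul_re, conj_re, conj_im, exp_ofReal_mul_I_re, exp_ofReal_mul_I_im]
  ring

lemma angle_exp_two_pi_mul_I_mul (θ φ : ℝ) :
    angle (exp (2 * Real.pi * I * θ)) (exp (2 * Real.pi * I * φ)) =
      2 * Real.pi * nearestIntDist (θ - φ) := by
  have hnonneg : 0 ≤ 2 * Real.pi * nearestIntDist (θ - φ) :=
    mul_nonneg Real.two_pi_pos.le (nearestIntDist_nonneg _)
  have hle : 2 * Real.pi * nearestIntDist (θ - φ) ≤ Real.pi := by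
    nlinarith [Real.pi_pos, nearestIntDist_le_half (θ - φ)]
  apply Real.arccos_eq_of_eq_cos hnonneg hle
  rw [cos_two_pi_mul_nearestIntDist, inner_exp_two_pi_mul_I_mul, norm_exp_two_pi_mul_I_mul,
    norm_exp_two_pi_mul_I_mul, mul_one, div_one]

lemma angle_ofReal_mul_exp_two_pi_mul_I_mul {s R : ℝ} (hs : 0 < s) (hR : 0 < R) (θ φ : ℝ) :
    angle (s * exp (2 * Real.pi * I * θ)) (R * exp (2 * Real.pi * I * φ)) =
      2 * Real.pi * nearestIntDist (θ - φ) := by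
  rw [← real_smul, ← real_smul, angle_smul_left_of_pos _ _ hs, angle_smul_right_of_pos _ _ hR,
    angle_exp_two_pi_mul_I_mul]

lemma four_mul_nearestIntDist_mul_le_norm_sub {s R θ φ : ℝ} (hs : 0 < s) (hR : 0 < R)
    (h : ‖s * exp (2 * Real.pi * I * θ) - R * exp (2 * Real.pi * I * φ)‖ ≤ R) :
    4 * nearestIntDist (θ - φ) * R ≤
      ‖s * exp (2 * Real.pi * I * θ) - R * exp (2 * Real.pi * I * φ)‖ := by
  have hnorm := norm_ofReal_mul_exp_two_pi_mul_I_mul hR.le φ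
  have key := two_div_pi_mul_angle_mul_norm_le_norm_sub (h.trans_eq hnorm.symm)
  rw [hnorm, angle_ofReal_mul_exp_two_pi_mul_I_mul hs hR] at key
  convert key using 2
  field

lemma abs_sq_sub_sq_lt {s R r : ℝ} (hrR : r ≤ R) (h : |s - R| < r) :
    |s ^ 2 - R ^ 2| < 3 * r * R := by
  have hr : 0 < r := (abs_nonneg _).trans_lt h
  obtain ⟨hlower, hupper⟩ := abs_lt.1 h
  have hsum : s + R ≤ 3 * R := by linarith
  calc |s ^ 2 - R ^ 2| = |s - R| * (s + R) := by
        rw [sq_sub_sq, abs_mul, abs_of_nonneg (by linarith : 0 ≤ s + R), mul_comm]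
    _ < r * (s + R) := by gcongr; linarith
    _ ≤ r * (3 * R) := by gcongr
    _ = 3 * r * R := by ring

theorem solvable_of_fermatSpiral_relDense_general {α β m r : ℝ} (hrm : r ^ 2 ≤ m)
    (hmeet : (fermatSpiral α ∩
      Metric.ball (Real.sqrt m * exp (2 * Real.pi * I * β)) r).Nonempty) :
    ∃ n : ℕ, |(n : ℝ) - m| < 3 * r * Real.sqrt m ∧
      nearestIntDist (n * α - β) < r / (4 * Real.sqrt m) := by
  obtain ⟨_, ⟨n, rfl⟩, hball⟩ := hmeet
  have hr : 0 < r := Metric.pos_of_mem_ball hball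
  have hrR : r ≤ Real.sqrt m := Real.le_sqrt_of_sq_le hrm
  have hR : 0 < Real.sqrt m := hr.trans_le hrR
  rw [mem_ball_iff_norm, ← ofReal_natCast, ← ofReal_mul] at hball
  have hradii : |Real.sqrt n - Real.sqrt m| < r := by
    have := (abs_norm_sub_norm_le _ _).trans_lt hball
    rwa [norm_ofReal_mul_exp_two_pi_mul_I_mul (Real.sqrt_nonneg _),
      norm_ofReal_mul_exp_two_pi_mul_I_mul hR.le] at this
  have hs : 0 < Real.sqrt n := by linarith [(abs_lt.1 hradii).1]
  refine ⟨n, ?_, ?_⟩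
  · simpa only [Real.sq_sqrt n.cast_nonneg, Real.sq_sqrt (Real.sqrt_pos.1 hR).le] using
      abs_sq_sub_sq_lt hrR hradii
  · have hangle := four_mul_nearestIntDist_mul_le_norm_sub hs hR (hball.le.trans hrR)
    rw [lt_div_iff₀ (by positivity)]
    linarith

/-- Let `α ∈ [0,1)` be irrational and `r > 1/2`.  If `X(√t, α)`
is `r`-relatively dense, then for every real `m ≥ 16r²` and every `β ∈ [0,1)` there
exists `n ∈ ℕ` with `m − 3r√m ≤ n ≤ m + 3r√m` and `‖nα − β‖ ≤ r/(2√m)`. -/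
theorem solvable_of_fermatSpiral_relDense
    (α : ℝ) (hα : α ∈ Set.Ico (0 : ℝ) 1) (hirr : Irrational α)
    (r : ℝ) (hr : 1 / 2 < r)
    (hdense : ∀ x : ℂ, ∃ z ∈ fermatSpiral α, z ∈ Metric.ball x r) :
    ∀ m : ℝ, 16 * r ^ 2 ≤ m → ∀ β ∈ Set.Ico (0 : ℝ) 1, ∃ n : ℕ,
      m - 3 * r * Real.sqrt m ≤ (n : ℝ) ∧
      (n : ℝ) ≤ m + 3 * r * Real.sqrt m ∧
      nearestIntDist ((n : ℝ) * α - β) ≤ r / (2 * Real.sqrt m) := by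
  intro m hm β _
  obtain ⟨n, hn, hβ⟩ := solvable_of_fermatSpiral_relDense_general (by nlinarith : r ^ 2 ≤ m)
    (hdense (Real.sqrt m * exp (2 * Real.pi * I * β)))
  obtain ⟨hlower, hupper⟩ := abs_lt.1 hn
  have hm0 : 0 < m := by nlinarith
  refine ⟨n, by linarith, by linarith, hβ.le.trans ?_⟩
  gcongr
  norm_num
end

section
/- Let α ∈ [0,1) be irrational and r > 1/2. Suppose that for every real m ≥ 16r² and every β ∈ [0,1) there exists n ∈ ℕ satisfying m − 3r√m ≤ n ≤ m + 3r√m and ‖nα − β‖ ≤ r/(2√m), where ‖x‖ denotes the distance from x to the nearest integer. Then the set X(√t, α) = { √n · e^{2πi n α} : n ∈ ℕ } ⊂ ℂ is 6r-relatively dense. -/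
/-!
Write `x = ρ e(φ)` with `e(t) = e^{2πit}`, and pick `n` for `m = ρ²` and `β = φ mod 1`. Moving from
`√n e(nα)` to `x` first radially and then along the circle of radius `ρ` costs at most
`|√n - ρ| + 2πρ ‖nα - φ‖`. The window for `n` bounds the first term by `2r`, the approximation
quality bounds the second by `πr`, and `π + 2 < 6`. If `ρ ≤ 4r`, the origin, which lies on the
spiral, is already close enough to `x`.
-/

section

open scoped FourierTransform

theorem nearestIntDist_add_intCast (t : ℝ) (k : ℤ) :
    nearestIntDist (t + k) = nearestIntDist t := by
  simp only [nearestIntDist, round_add_intCast, Int.cast_add, add_sub_add_right_eq_sub]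

theorem nearestIntDist_sub_fract (s t : ℝ) :
    nearestIntDist (s - Int.fract t) = nearestIntDist (s - t) := by
  rw [← nearestIntDist_add_intCast (s - t) ⌊t⌋, Int.fract, sub_sub_eq_add_sub, add_sub_right_comm]

theorem fourierChar_intCast (k : ℤ) : 𝐞 (k : ℝ) = 1 :=
  Circle.exp_two_pi_mul_int k

theorem norm_fourierChar_sub_one_le (t : ℝ) : ‖(𝐞 t : ℂ) - 1‖ ≤ 2 * Real.pi * |t| := by
  rw [Real.fourierChar_apply, mul_comm]
  refine Real.norm_exp_I_mul_ofReal_sub_one_le.trans_eq ?_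
  rw [Real.norm_eq_abs, abs_mul, abs_of_pos Real.two_pi_pos]

theorem norm_fourierChar_sub_one_le_nearestIntDist (t : ℝ) :
    ‖(𝐞 t : ℂ) - 1‖ ≤ 2 * Real.pi * nearestIntDist t := by
  have hround : 𝐞 t = 𝐞 (t - round t) := by
    rw [AddChar.map_sub_eq_div, fourierChar_intCast, div_one]
  rw [hround]
  exact norm_fourierChar_sub_one_le _

theorem dist_fourierChar_le_nearestIntDist (s t : ℝ) :
    dist (𝐞 s : ℂ) (𝐞 t) ≤ 2 * Real.pi * nearestIntDist (s - t) := by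
  have hfactor : (𝐞 s : ℂ) - 𝐞 t = (𝐞 (s - t) - 1) * 𝐞 t := by
    rw [sub_one_mul, ← Circle.coe_mul, ← AddChar.map_add_eq_mul, sub_add_cancel]
  rw [dist_eq_norm, hfactor, norm_mul, Circle.norm_coe, mul_one]
  exact norm_fourierChar_sub_one_le_nearestIntDist _

theorem norm_mul_fourierChar_arg (x : ℂ) :
    (‖x‖ : ℂ) * 𝐞 (x.arg / (2 * Real.pi)) = x := by
  rw [Real.fourierChar_apply, mul_div_cancel₀ _ Real.two_pi_pos.ne', Complex.norm_mul_exp_arg_mul_I]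

theorem dist_mul_fourierChar_le (s ρ t φ : ℝ) :
    dist ((s : ℂ) * 𝐞 t) (ρ * 𝐞 φ) ≤ |s - ρ| + |ρ| * (2 * Real.pi * nearestIntDist (t - φ)) := by
  have hradial : dist ((s : ℂ) * 𝐞 t) (ρ * 𝐞 t) = |s - ρ| := by
    rw [dist_eq_norm, ← sub_mul, norm_mul, Circle.norm_coe, mul_one, ← Complex.ofReal_sub,
      Complex.norm_real, Real.norm_eq_abs]
  have hangular : dist ((ρ : ℂ) * 𝐞 t) (ρ * 𝐞 φ) = |ρ| * dist (𝐞 t : ℂ) (𝐞 φ) := by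
    rw [dist_eq_norm, dist_eq_norm, ← mul_sub, norm_mul, Complex.norm_real, Real.norm_eq_abs]
  calc dist ((s : ℂ) * 𝐞 t) (ρ * 𝐞 φ)
      ≤ dist ((s : ℂ) * 𝐞 t) (ρ * 𝐞 t) + dist ((ρ : ℂ) * 𝐞 t) (ρ * 𝐞 φ) := dist_triangle _ _ _
    _ ≤ |s - ρ| + |ρ| * (2 * Real.pi * nearestIntDist (t - φ)) := by
        rw [hradial, hangular]
        gcongr
        exact dist_fourierChar_le_nearestIntDist t φ

theorem dist_mul_fourierChar_le_arg (s t : ℝ) (x : ℂ) :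
    dist ((s : ℂ) * 𝐞 t) x ≤
      |s - ‖x‖| + ‖x‖ * (2 * Real.pi * nearestIntDist (t - x.arg / (2 * Real.pi))) := by
  simpa only [norm_mul_fourierChar_arg, abs_norm] using
    dist_mul_fourierChar_le s ‖x‖ t (x.arg / (2 * Real.pi))

theorem sqrt_mul_fourierChar_mem_fermatSpiral (α : ℝ) (n : ℕ) :
    (Real.sqrt n : ℂ) * 𝐞 (n * α) ∈ fermatSpiral α := by
  refine ⟨n, ?_⟩
  rw [Real.fourierChar_apply]
  push_cast
  ring_nf

theorem zero_mem_fermatSpiral (α : ℝ) : 0 ∈ fermatSpiral α := ⟨0, by simp⟩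

theorem abs_sqrt_sub_le_of_sq {a ρ δ : ℝ} (hδ : 0 ≤ ρ + δ) (hlower : (ρ - δ) ^ 2 ≤ a)
    (hupper : a ≤ (ρ + δ) ^ 2) : |Real.sqrt a - ρ| ≤ δ :=
  abs_sub_le_iff.2 ⟨sub_le_iff_le_add'.2 ((Real.sqrt_le_left hδ).2 hupper),
    sub_le_comm.1 (Real.le_sqrt_of_sq_le hlower)⟩

/- `ρ ^ 2 - 3 * r * ρ = (ρ - 2 * r) ^ 2 + r * (ρ - 4 * r)`: this is where the threshold
`ρ ^ 2 ≥ 16 * r ^ 2` comes from. -/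
theorem abs_sqrt_sub_le_two_mul {a ρ r : ℝ} (hr : 0 ≤ r) (hρ : 4 * r ≤ ρ)
    (hlower : ρ ^ 2 - 3 * r * ρ ≤ a) (hupper : a ≤ ρ ^ 2 + 3 * r * ρ) :
    |Real.sqrt a - ρ| ≤ 2 * r := by
  have hgap : 0 ≤ r * (ρ - 4 * r) := mul_nonneg hr (sub_nonneg.2 hρ)
  apply abs_sqrt_sub_le_of_sq
  · linarith
  · linarith
  · linarith [sq_nonneg r]

theorem fermatSpiral_relDense_of_solvable_general {α r : ℝ} (hr : 0 ≤ r)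
    (hsolv : ∀ m : ℝ, 16 * r ^ 2 ≤ m → ∀ β ∈ Set.Ico (0 : ℝ) 1, ∃ n : ℕ,
      m - 3 * r * Real.sqrt m ≤ (n : ℝ) ∧
      (n : ℝ) ≤ m + 3 * r * Real.sqrt m ∧
      nearestIntDist ((n : ℝ) * α - β) ≤ r / (2 * Real.sqrt m)) (x : ℂ) :
    ∃ z ∈ fermatSpiral α, dist z x ≤ (Real.pi + 2) * r := by
  obtain hx | hx := le_or_gt ‖x‖ (4 * r)
  · refine ⟨0, zero_mem_fermatSpiral α, ?_⟩
    rw [dist_zero_left]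
    exact hx.trans (mul_le_mul_of_nonneg_right (by linarith [Real.two_le_pi]) hr)
  have hx₀ : 0 < ‖x‖ := by linarith
  have hm : 16 * r ^ 2 ≤ ‖x‖ ^ 2 := by linarith [pow_le_pow_left₀ (by linarith) hx.le 2]
  obtain ⟨n, hlower, hupper, hangle⟩ := hsolv (‖x‖ ^ 2) hm
    (Int.fract (x.arg / (2 * Real.pi))) ⟨Int.fract_nonneg _, Int.fract_lt_one _⟩
  rw [Real.sqrt_sq hx₀.le] at hlower hupper hangle
  rw [nearestIntDist_sub_fract] at hangle
  refine ⟨_, sqrt_mul_fourierChar_mem_fermatSpiral α n, ?_⟩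
  calc dist ((Real.sqrt n : ℂ) * 𝐞 (n * α)) x
      ≤ |Real.sqrt n - ‖x‖| +
          ‖x‖ * (2 * Real.pi * nearestIntDist (n * α - x.arg / (2 * Real.pi))) :=
        dist_mul_fourierChar_le_arg _ _ x
    _ ≤ 2 * r + ‖x‖ * (2 * Real.pi * (r / (2 * ‖x‖))) := by
        gcongr
        exact abs_sqrt_sub_le_two_mul hr hx.le hlower hupper
    _ = (Real.pi + 2) * r := by
        field_simp
        ring

end

/-- Let `α ∈ [0,1)` be irrational and `r > 1/2`.  Suppose that
for every real `m ≥ 16r²` and every `β ∈ [0,1)` there exists `n ∈ ℕ` with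
`m − 3r√m ≤ n ≤ m + 3r√m` and `‖nα − β‖ ≤ r/(2√m)`.  Then `X(√t, α)` is
`6r`-relatively dense. -/
theorem fermatSpiral_relDense_of_solvable
    (α : ℝ) (hα : α ∈ Set.Ico (0 : ℝ) 1) (hirr : Irrational α)
    (r : ℝ) (hr : 1 / 2 < r)
    (hsolv : ∀ m : ℝ, 16 * r ^ 2 ≤ m → ∀ β ∈ Set.Ico (0 : ℝ) 1, ∃ n : ℕ,
      m - 3 * r * Real.sqrt m ≤ (n : ℝ) ∧
      (n : ℝ) ≤ m + 3 * r * Real.sqrt m ∧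
      nearestIntDist ((n : ℝ) * α - β) ≤ r / (2 * Real.sqrt m)) :
    ∀ x : ℂ, ∃ z ∈ fermatSpiral α, z ∈ Metric.ball x (6 * r) := by
  intro x
  obtain ⟨z, hz, hzx⟩ := fermatSpiral_relDense_of_solvable_general (by linarith) hsolv x
  exact ⟨z, hz, hzx.trans_lt (by nlinarith [Real.pi_lt_four])⟩
end

section
/- Let α ∈ (0,1) be irrational such that there is a constant R > 0 bounding, for all N ∈ ℕ, the ratios of the lengths of the subintervals into which {nα mod 1 : n = 0,…,N} divide the circle ℝ/ℤ, and let r ≥ max{√(R/5), 1}. Then for every real m ≥ 16r² and every β ∈ [0,1) there exists n ∈ ℕ satisfying m − 3r√m ≤ n ≤ m + 3r√m and ‖nα − β‖ ≤ r/(2√m), where ‖x‖ denotes the distance from x to the nearest integer. -/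
/-!
By Dirichlet's theorem the points `nα mod 1`, `n ≤ N`, leave a gap of length at most `1 / (N + 1)`,
so a bound `R` on the ratios makes every gap at most `R / (N + 1)`. Each point of the circle is
then within `R / (2 * (N + 1))` of some `nα`, and rotating by `aα` gives the same for
`a ≤ n ≤ a + N`. The interval `[m - 3r√m, m + 3r√m]` contains more than `6r√m - 1` consecutive
integers, and `R ≤ 5r²` with `r√m ≥ 1` gives `R / (2 * (6r√m - 1)) ≤ r / (2√m)`.
-/

theorem nearestIntDist_le_abs_sub_intCast (x : ℝ) (j : ℤ) : nearestIntDist x ≤ |x - j| :=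
  round_le x j

theorem nearestIntDist_sub_intCast (x : ℝ) (j : ℤ) :
    nearestIntDist (x - j) = nearestIntDist x := by
  simp only [nearestIntDist, round_sub_intCast, Int.cast_sub, sub_sub_sub_cancel_right]

theorem nearestIntDist_fract_sub (x y : ℝ) :
    nearestIntDist (Int.fract x - y) = nearestIntDist (x - y) := by
  rw [Int.fract, sub_right_comm, nearestIntDist_sub_intCast]

theorem cyclicGap_fract_le {T : Finset ℝ} {x d : ℝ} (hd : 0 < d) (h : Int.fract (x + d) ∈ T) :
    cyclicGap T (Int.fract x) ≤ d := by
  refine csInf_le ⟨0, fun _ he => he.1.le⟩ ⟨hd, ?_⟩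
  rwa [← Int.self_sub_floor x, sub_add_eq_add_sub, Int.fract_sub_intCast]

theorem exists_lt_of_cyclicGap_lt {T : Finset ℝ} {t h : ℝ} (ht : t ∈ T)
    (ht01 : t ∈ Set.Ico (0 : ℝ) 1) (hgap : cyclicGap T t < h) :
    ∃ d, 0 < d ∧ d < h ∧ Int.fract (t + d) ∈ T := by
  have hne : {d : ℝ | 0 < d ∧ Int.fract (t + d) ∈ T}.Nonempty :=
    ⟨1, one_pos, by rwa [Int.fract_add_one, Int.fract_eq_self.2 ht01]⟩
  obtain ⟨d, ⟨hd, hdT⟩, hdh⟩ := exists_lt_of_csInf_lt hne hgap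
  exact ⟨d, hd, hdh, hdT⟩

theorem exists_mem_nearestIntDist_sub_lt {T : Finset ℝ} (hT : T.Nonempty)
    (hT01 : ∀ t ∈ T, t ∈ Set.Ico (0 : ℝ) 1) {δ : ℝ} (hgap : ∀ t ∈ T, cyclicGap T t < 2 * δ)
    (x : ℝ) : ∃ t ∈ T, nearestIntDist (t - x) < δ := by
  -- `t` is the last point of `T` met before `x` when going around the circle.
  obtain ⟨t, ht, hmin⟩ := T.exists_min_image (fun t => Int.fract (x - t)) hT
  obtain ⟨d, hd, hdδ, hdT⟩ := exists_lt_of_cyclicGap_lt ht (hT01 t ht) (hgap t ht)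
  set c := Int.fract (x - t)
  have hcx : c = x - t - ⌊x - t⌋ := rfl
  have hcd : c < d := by
    by_contra! hdc
    have hstep : Int.fract (x - Int.fract (t + d)) = c - d := by
      refine Int.fract_eq_iff.2 ⟨by linarith, by linarith [Int.fract_lt_one (x - t)],
        ⌊t + d⌋ + ⌊x - t⌋, ?_⟩
      rw [hcx, Int.fract]
      push_cast
      ring
    linarith [hmin _ hdT]
  rcases lt_or_ge c δ with hcδ | hδc
  · refine ⟨t, ht, (nearestIntDist_le_abs_sub_intCast _ (-⌊x - t⌋)).trans_lt ?_⟩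
    have hdist : t - x - (-⌊x - t⌋ : ℤ) = -c := by push_cast; linarith
    rwa [hdist, abs_neg, abs_of_nonneg (Int.fract_nonneg _)]
  · refine ⟨_, hdT, ?_⟩
    rw [nearestIntDist_fract_sub]
    refine (nearestIntDist_le_abs_sub_intCast _ (-⌊x - t⌋)).trans_lt ?_
    have hdist : t + d - x - (-⌊x - t⌋ : ℤ) = d - c := by push_cast; linarith
    rw [hdist, abs_of_pos (sub_pos.2 hcd)]
    linarith

theorem fract_mem_torusPts (α : ℝ) {N n : ℕ} (h : n ≤ N) :
    Int.fract ((n : ℝ) * α) ∈ torusPts α N :=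
  Finset.mem_image_of_mem _ (Finset.mem_range_succ_iff.2 h)

theorem zero_mem_torusPts (α : ℝ) (N : ℕ) : (0 : ℝ) ∈ torusPts α N := by
  simpa using fract_mem_torusPts α (Nat.zero_le N)

theorem mem_Ico_of_mem_torusPts {α t : ℝ} {N : ℕ} (ht : t ∈ torusPts α N) :
    t ∈ Set.Ico (0 : ℝ) 1 := by
  obtain ⟨n, -, rfl⟩ := Finset.mem_image.1 ht
  exact ⟨Int.fract_nonneg _, Int.fract_lt_one _⟩

theorem exists_cyclicGap_torusPts_le_abs_sub {α : ℝ} {N k : ℕ} {j : ℤ} (hkN : k ≤ N)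
    (hne : (k : ℝ) * α ≠ j) :
    ∃ u ∈ torusPts α N, cyclicGap (torusPts α N) u ≤ |(k : ℝ) * α - j| := by
  rcases lt_or_gt_of_ne hne with hlt | hgt
  · refine ⟨_, fract_mem_torusPts α hkN, ?_⟩
    rw [abs_of_neg (sub_neg.2 hlt), neg_sub]
    refine cyclicGap_fract_le (sub_pos.2 hlt) ?_
    rw [add_sub_cancel, Int.fract_intCast]
    exact zero_mem_torusPts α N
  · refine ⟨_, fract_mem_torusPts α N.zero_le, ?_⟩
    rw [abs_of_pos (sub_pos.2 hgt)]
    refine cyclicGap_fract_le (sub_pos.2 hgt) ?_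
    rw [Nat.cast_zero, zero_mul, zero_add, Int.fract_sub_intCast]
    exact fract_mem_torusPts α hkN

theorem exists_cyclicGap_torusPts_le {α : ℝ} (hirr : Irrational α) (N : ℕ) :
    ∃ u ∈ torusPts α N, cyclicGap (torusPts α N) u ≤ 1 / ((N : ℝ) + 1) := by
  rcases N.eq_zero_or_pos with rfl | hN
  · refine ⟨_, fract_mem_torusPts α le_rfl, cyclicGap_fract_le (by norm_num) ?_⟩
    simpa using zero_mem_torusPts α 0
  · obtain ⟨k, hk, hkN, hdist⟩ := Real.exists_nat_abs_mul_sub_round_le α hN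
    obtain ⟨u, hu, hgap⟩ :=
      exists_cyclicGap_torusPts_le_abs_sub hkN ((hirr.natCast_mul hk.ne').ne_int (round (k * α)))
    exact ⟨u, hu, hgap.trans hdist⟩

theorem exists_nat_le_nearestIntDist_lt {α : ℝ} (hirr : Irrational α) {R : ℝ} (hR : 0 ≤ R) {N : ℕ}
    (hratio : ∀ t ∈ torusPts α N, ∀ u ∈ torusPts α N,
      cyclicGap (torusPts α N) t ≤ R * cyclicGap (torusPts α N) u)
    {δ : ℝ} (hδ : R < 2 * δ * (N + 1)) (β : ℝ) :
    ∃ n ≤ N, nearestIntDist ((n : ℝ) * α - β) < δ := by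
  obtain ⟨u, hu, hgapu⟩ := exists_cyclicGap_torusPts_le hirr N
  have hgap : ∀ t ∈ torusPts α N, cyclicGap (torusPts α N) t < 2 * δ := fun t ht => calc
    cyclicGap (torusPts α N) t ≤ R * cyclicGap (torusPts α N) u := hratio t ht u hu
    _ ≤ R * (1 / (N + 1)) := by gcongr
    _ = R / (N + 1) := mul_one_div _ _
    _ < 2 * δ := (div_lt_iff₀ N.cast_add_one_pos).2 hδ
  obtain ⟨t, ht, hdist⟩ := exists_mem_nearestIntDist_sub_lt ⟨0, zero_mem_torusPts α N⟩
    (fun _ => mem_Ico_of_mem_torusPts) hgap β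
  obtain ⟨n, hn, rfl⟩ := Finset.mem_image.1 ht
  rw [nearestIntDist_fract_sub] at hdist
  exact ⟨n, Finset.mem_range_succ_iff.1 hn, hdist⟩

theorem exists_int_mem_Icc_nearestIntDist_lt {α : ℝ} (hirr : Irrational α) {R : ℝ} (hR : 0 < R)
    (hratio : ∀ N : ℕ, ∀ t ∈ torusPts α N, ∀ u ∈ torusPts α N,
      cyclicGap (torusPts α N) t ≤ R * cyclicGap (torusPts α N) u)
    {x y δ : ℝ} (hδ : 0 < δ) (hxy : R ≤ 2 * δ * (y - x - 1)) (β : ℝ) :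
    ∃ n : ℤ, (n : ℝ) ∈ Set.Icc x y ∧ nearestIntDist ((n : ℝ) * α - β) < δ := by
  have hlen : 0 < y - x - 1 := pos_of_mul_pos_right (hR.trans_le hxy) (by positivity)
  have hceil : (⌈x⌉ : ℝ) < x + 1 := Int.ceil_lt_add_one x
  have hfloor : (⌊y - ⌈x⌉⌋₊ : ℝ) ≤ y - ⌈x⌉ := Nat.floor_le (by linarith)
  have hcount : y - x - 1 < ⌊y - ⌈x⌉⌋₊ + 1 := by linarith [Nat.lt_floor_add_one (y - ⌈x⌉)]
  obtain ⟨i, hi, hdist⟩ := exists_nat_le_nearestIntDist_lt hirr hR.le (hratio ⌊y - ⌈x⌉⌋₊)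
    (hxy.trans_lt (by gcongr)) (β - ⌈x⌉ * α)
  have hi' : (i : ℝ) ≤ ⌊y - ⌈x⌉⌋₊ := Nat.cast_le.2 hi
  refine ⟨⌈x⌉ + i, ⟨?_, ?_⟩, ?_⟩
  · push_cast
    linarith [Int.le_ceil x, i.cast_nonneg (α := ℝ)]
  · push_cast
    linarith
  · convert hdist using 2
    push_cast
    ring

theorem solvable_of_bounded_gap_ratios_general {α : ℝ} (hirr : Irrational α) {R : ℝ} (hR : 0 < R)
    (hratio : ∀ N : ℕ, ∀ t ∈ torusPts α N, ∀ u ∈ torusPts α N,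
      cyclicGap (torusPts α N) t ≤ R * cyclicGap (torusPts α N) u)
    {r m : ℝ} (hr : Real.sqrt (R / 5) ≤ r) (hm : 9 * r ^ 2 ≤ m) (hrm : 1 ≤ r * Real.sqrt m)
    (β : ℝ) :
    ∃ n : ℕ, m - 3 * r * Real.sqrt m ≤ (n : ℝ) ∧ (n : ℝ) ≤ m + 3 * r * Real.sqrt m ∧
      nearestIntDist ((n : ℝ) * α - β) < r / (2 * Real.sqrt m) := by
  obtain ⟨hr0, hRr⟩ := Real.sqrt_le_iff.1 hr
  have hsqrt : 0 < Real.sqrt m := pos_of_mul_pos_right (one_pos.trans_le hrm) hr0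
  have hrpos : 0 < r := pos_of_mul_pos_left (one_pos.trans_le hrm) hsqrt.le
  have hlow : 0 ≤ m - 3 * r * Real.sqrt m := by
    have h3r : 3 * r ≤ Real.sqrt m := Real.le_sqrt_of_sq_le (by linarith)
    have hfactor : m - 3 * r * Real.sqrt m = Real.sqrt m * (Real.sqrt m - 3 * r) := by
      linear_combination -Real.mul_self_sqrt (Real.sqrt_pos.1 hsqrt).le
    exact hfactor ▸ mul_nonneg hsqrt.le (sub_nonneg.2 h3r)
  have hwindow : R ≤ 2 * (r / (2 * Real.sqrt m)) *
      (m + 3 * r * Real.sqrt m - (m - 3 * r * Real.sqrt m) - 1) := calc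
    R ≤ 5 * r ^ 2 := by linarith
    _ ≤ 5 * r ^ 2 + r / Real.sqrt m * (r * Real.sqrt m - 1) :=
      le_add_of_nonneg_right (mul_nonneg (by positivity) (sub_nonneg.2 hrm))
    _ = _ := by field_simp; ring
  obtain ⟨n, ⟨hxn, hny⟩, hdist⟩ :=
    exists_int_mem_Icc_nearestIntDist_lt hirr hR hratio (by positivity) hwindow β
  lift n to ℕ using Int.cast_nonneg_iff.1 (hlow.trans hxn)
  exact ⟨n, hxn, hny, hdist⟩

/-- Let `α ∈ (0,1)` be irrational and suppose `R > 0` bounds, for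
all `N ∈ ℕ`, the ratios of the lengths of the subintervals into which the points
`{nα mod 1 : n = 0, …, N}` divide the circle `ℝ/ℤ`.  Let `r ≥ max{√(R/5), 1}`.
Then for every real `m ≥ 16r²` and every `β ∈ [0,1)` there exists `n ∈ ℕ` with
`m − 3r√m ≤ n ≤ m + 3r√m` and `‖nα − β‖ ≤ r/(2√m)`. -/
theorem solvable_of_bounded_gap_ratios
    (α : ℝ) (hα : α ∈ Set.Ioo (0 : ℝ) 1) (hirr : Irrational α)
    (R : ℝ) (hR : 0 < R)
    (hratio : ∀ N : ℕ, ∀ t ∈ torusPts α N, ∀ u ∈ torusPts α N,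
      cyclicGap (torusPts α N) t ≤ R * cyclicGap (torusPts α N) u)
    (r : ℝ) (hr : max (Real.sqrt (R / 5)) 1 ≤ r) :
    ∀ m : ℝ, 16 * r ^ 2 ≤ m → ∀ β ∈ Set.Ico (0 : ℝ) 1, ∃ n : ℕ,
      m - 3 * r * Real.sqrt m ≤ (n : ℝ) ∧
      (n : ℝ) ≤ m + 3 * r * Real.sqrt m ∧
      nearestIntDist ((n : ℝ) * α - β) ≤ r / (2 * Real.sqrt m) := by
  intro m hm β _
  obtain ⟨hrR, hr1⟩ := max_le_iff.1 hr
  have hrm : 1 ≤ r * Real.sqrt m :=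
    one_le_mul_of_one_le_of_one_le hr1 (Real.one_le_sqrt.2 (by nlinarith))
  obtain ⟨n, hlow, hhigh, hdist⟩ := solvable_of_bounded_gap_ratios_general hirr hR hratio hrR
    (by nlinarith : 9 * r ^ 2 ≤ m) hrm β
  exact ⟨n, hlow, hhigh, hdist.le⟩
end
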